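/- arXiv:2601.13058 — 4 statements merged into one kernel-verified Lean document; each statement's English description precedes it below -/
import Mathlib

section
/- For every integer n ≥ 1, the map g_n is a bijection of the Cantor space ℕ → Bool. -/
/-- Concatenation of a finite binary word `u` with an infinite sequence `x`
in the Cantor space `ℕ → Bool`. -/
def cat (u : List Bool) (x : ℕ → Bool) : ℕ → Bool :=
  fun i => u.getD i (x (i - u.length))

/-- `g` satisfies the defining rules of the map `g_n`:
`g_n(1^k 0 w) = 0^k 1 w` for `0 ≤ k < n-1`, and `g_n(1^{n-1} w) = 0^{n-1} w`. -/
def GnRules (n : ℕ) (g : (ℕ → Bool) → ℕ → Bool) : Prop :=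
  (∀ k, k < n - 1 → ∀ w : ℕ → Bool,
      g (cat (List.replicate k true ++ [false]) w)
        = cat (List.replicate k false ++ [true]) w) ∧
  (∀ w : ℕ → Bool,
      g (cat (List.replicate (n - 1) true) w) = cat (List.replicate (n - 1) false) w)

theorem cat_block (b : Bool) (k : ℕ) (w : ℕ → Bool) (i : ℕ) :
    cat (List.replicate k b ++ [!b]) w i
      = if i < k then b else if i = k then !b else w (i - (k + 1)) := by
  unfold cat
  simp only [List.getD_eq_getElem?_getD, List.getElem?_append, List.length_replicate,
    List.length_append, List.length_singleton]
  split_ifs with h1 h2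
  · simp [h1]
  · simp [h2]
  · have : ([!b] : List Bool)[i - k]? = none := by
      simp; omega
    rw [this]; rfl

theorem cat_rep (b : Bool) (k : ℕ) (w : ℕ → Bool) (i : ℕ) :
    cat (List.replicate k b) w i = if i < k then b else w (i - k) := by
  unfold cat
  simp only [List.getD_eq_getElem?_getD, List.getElem?_replicate, List.length_replicate]
  split_ifs <;> rfl

theorem decomp (b : Bool) (m : ℕ) (x : ℕ → Bool) :
    (∃ k, k < m ∧ ∃ w, x = cat (List.replicate k b ++ [!b]) w) ∨
      ∃ w, x = cat (List.replicate m b) w := by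
  classical
  by_cases h : ∃ i, i < m ∧ x i ≠ b
  · left
    have hs := Nat.find_spec h
    refine ⟨Nat.find h, hs.1, fun i => x (i + (Nat.find h + 1)), ?_⟩
    funext i
    rw [cat_block]
    split_ifs with h1 h2
    · by_contra hc
      exact Nat.find_min h h1 ⟨by omega, hc⟩
    · rw [h2]; exact Bool.eq_not_of_ne hs.2
    · congr 1; omega
  · right
    push Not at h
    refine ⟨fun i => x (i + m), ?_⟩
    funext i
    rw [cat_rep]
    split_ifs with h1
    · exact h i h1
    · congr 1; omega

theorem block_inj {b : Bool} {k l : ℕ} {v w : ℕ → Bool}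
    (h : cat (List.replicate k b ++ [!b]) v = cat (List.replicate l b ++ [!b]) w) :
    k = l ∧ v = w := by
  have hk := congrFun h k
  have hl := congrFun h l
  rw [cat_block, cat_block] at hk hl
  have hkl : k = l := by
    rcases lt_trichotomy k l with h1 | h1 | h1
    · simp [h1] at hk
    · exact h1
    · simp [h1] at hl
  subst hkl
  refine ⟨rfl, funext fun i => ?_⟩
  have := congrFun h (i + (k + 1))
  rw [cat_block, cat_block] at this
  simpa [show ¬ (i + (k + 1) < k) by omega, show ¬ (i + (k + 1) = k) by omega] using this

theorem block_ne_rep {b : Bool} {k m : ℕ} {v w : ℕ → Bool} (hk : k < m) :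
    cat (List.replicate k b ++ [!b]) v ≠ cat (List.replicate m b) w := by
  intro h
  have := congrFun h k
  rw [cat_block, cat_rep] at this
  simp [hk] at this

theorem rep_inj {b : Bool} {m : ℕ} {v w : ℕ → Bool}
    (h : cat (List.replicate m b) v = cat (List.replicate m b) w) : v = w := by
  funext i
  have := congrFun h (i + m)
  rw [cat_rep, cat_rep] at this
  simpa using this

/-- For every `n ≥ 1`, the map `g_n` is a bijection of the Cantor space `ℕ → Bool`. -/
theorem gn_bijective (n : ℕ) (hn : 1 ≤ n)
    (g : (ℕ → Bool) → ℕ → Bool) (hg : GnRules n g) :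
    Function.Bijective g := by
  obtain ⟨h1, h2⟩ := hg
  constructor
  · intro x y hxy
    rcases decomp true (n - 1) x with ⟨k, hk, v, rfl⟩ | ⟨v, rfl⟩ <;>
    rcases decomp true (n - 1) y with ⟨l, hl, w, rfl⟩ | ⟨w, rfl⟩
    · have := (h1 k hk v).symm.trans (hxy.trans (h1 l hl w))
      obtain ⟨rfl, rfl⟩ := block_inj (b := false) this
      rfl
    · exact absurd ((h1 k hk v).symm.trans (hxy.trans (h2 w))) (block_ne_rep (b := false) hk)
    · exact absurd ((h1 l hl w).symm.trans (hxy.symm.trans (h2 v)))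
        (block_ne_rep (b := false) hl)
    · rw [rep_inj ((h2 v).symm.trans (hxy.trans (h2 w)))]
  · intro y
    rcases decomp false (n - 1) y with ⟨k, hk, v, rfl⟩ | ⟨v, rfl⟩
    · exact ⟨_, h1 k hk v⟩
    · exact ⟨_, h2 v⟩
end

section
/- For every integer n ≥ 1, the order of g_n as an element of the permutation group of ℕ → Bool is exactly 2^{n−1}; that is, g_n^{2^{n−1}} is the identity and g_n^j is not the identity for every j with 0 < j < 2^{n−1}. -/
theorem cat_nil' (x : ℕ → Bool) : cat [] x = x := by
  funext i; simp [cat]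

theorem cat_cons' (a : Bool) (u : List Bool) (x : ℕ → Bool) :
    cat (a :: u) x = cat [a] (cat u x) := by
  funext i
  cases i <;> simp [cat]

theorem cat_head_tail (x : ℕ → Bool) : x = cat [x 0] (fun i => x (i + 1)) := by
  funext i
  cases i <;> simp [cat]

theorem cat_zero' (a : Bool) (x : ℕ → Bool) : cat [a] x 0 = a := by
  simp [cat]

theorem cat_succ' (a : Bool) (x : ℕ → Bool) (i : ℕ) : cat [a] x (i + 1) = x i := by
  simp [cat]

theorem cat_inj' (a : Bool) (x y : ℕ → Bool) (h : cat [a] x = cat [a] y) : x = y := by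
  funext i
  have := congrFun h (i + 1)
  simpa [cat_succ'] using this

theorem word_cases (m : ℕ) : ∀ x : ℕ → Bool,
    (∃ k, k < m ∧ ∃ w, x = cat (List.replicate k true ++ [false]) w) ∨
      ∃ w, x = cat (List.replicate m true) w := by
  induction m with
  | zero => intro x; right; exact ⟨x, by simp [cat_nil']⟩
  | succ m ih =>
    intro x
    have hx := cat_head_tail x
    cases h0 : x 0 with
    | false =>
      left
      rw [h0] at hx
      exact ⟨0, Nat.succ_pos m, _, by simpa using hx⟩
    | true =>
      rw [h0] at hx
      rcases ih (fun i => x (i + 1)) with ⟨k, hk, w, hw⟩ | ⟨w, hw⟩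
      · left
        refine ⟨k + 1, by omega, w, ?_⟩
        rw [List.replicate_succ, List.cons_append, cat_cons', ← hw]
        exact hx
      · right
        refine ⟨w, ?_⟩
        rw [List.replicate_succ, cat_cons', ← hw]
        exact hx

theorem gn_order_aux (m : ℕ) : ∀ g : (ℕ → Bool) → ℕ → Bool, GnRules (m + 1) g →
    g^[2 ^ m] = id ∧ ∀ j, 0 < j → j < 2 ^ m → g^[j] ≠ id := by
  induction m with
  | zero =>
    intro g hg
    refine ⟨?_, fun j h1 h2 => by simp at h2; omega⟩
    funext x
    have := hg.2 x
    simpa [cat_nil'] using this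
  | succ m ih =>
    intro g hg
    obtain ⟨hg1, hg2⟩ := hg
    simp only [Nat.add_sub_cancel] at hg1 hg2
    have e0 : ∀ w, g (cat [false] w) = cat [true] w := by
      intro w
      simpa using hg1 0 (Nat.succ_pos m) w
    have e1 : ∀ w, ∃ w', g (cat [true] w) = cat [false] w' := by
      intro w
      rcases word_cases m w with ⟨k, hk, v, rfl⟩ | ⟨v, rfl⟩
      · have := hg1 (k + 1) (by omega) v
        rw [List.replicate_succ, List.replicate_succ, List.cons_append, List.cons_append,
          cat_cons', cat_cons' false] at this
        exact ⟨_, this⟩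
      · have := hg2 v
        rw [List.replicate_succ, List.replicate_succ, cat_cons', cat_cons' false] at this
        exact ⟨_, this⟩
    choose h hh using e1
    have hr : GnRules (m + 1) h := by
      constructor
      · intro k hk w
        have := hg1 (k + 1) (by omega) w
        rw [List.replicate_succ, List.replicate_succ, List.cons_append, List.cons_append,
          cat_cons', cat_cons' false, hh] at this
        exact cat_inj' _ _ _ this
      · intro w
        have := hg2 w
        rw [List.replicate_succ, List.replicate_succ, cat_cons', cat_cons' false, hh] at this
        exact cat_inj' _ _ _ this
    have sq : ∀ b w, g^[2] (cat [b] w) = cat [b] (h w) := by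
      intro b w
      cases b
      · simp [e0, hh]
      · simp [e0, hh]
    have ev : ∀ i b w, g^[2 * i] (cat [b] w) = cat [b] (h^[i] w) := by
      intro i
      induction i with
      | zero => intro b w; simp
      | succ i ihi =>
        intro b w
        rw [Nat.mul_succ, Function.iterate_add_apply, sq, ihi, Function.iterate_succ_apply]
    obtain ⟨h1, h2⟩ := ih h hr
    constructor
    · funext x
      rw [cat_head_tail x, pow_succ, mul_comm, ev, h1]
      rfl
    · intro j hj0 hj heq
      rcases Nat.even_or_odd' j with ⟨i, rfl | rfl⟩
      · refine h2 i (by omega) (by rw [pow_succ] at hj; omega) ?_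
        funext w
        have := congrFun heq (cat [true] w)
        rw [ev] at this
        exact cat_inj' _ _ _ this
      · have := congrFun heq (cat [false] (fun _ => false))
        rw [Function.iterate_succ_apply, e0, ev] at this
        have := congrFun this 0
        simp [cat_zero'] at this

/-- For every `n ≥ 1`, the order of `g_n` as a permutation of `ℕ → Bool` is exactly
`2^(n-1)`: the `2^(n-1)`-th iterate is the identity and no smaller positive iterate is. -/
theorem gn_order (n : ℕ) (hn : 1 ≤ n)
    (g : (ℕ → Bool) → ℕ → Bool) (hg : GnRules n g) :
    g^[2 ^ (n - 1)] = id ∧ ∀ j, 0 < j → j < 2 ^ (n - 1) → g^[j] ≠ id := by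
  obtain ⟨m, rfl⟩ : ∃ m, n = m + 1 := ⟨n - 1, by omega⟩
  exact gn_order_aux m g hg
end

section
/- The map h has infinite order as a permutation of ℕ → Bool: for every integer k ≥ 1, the k-th iterate h^k is not the identity. -/
/-- `h` satisfies the defining prefix rules: `h(00w) = 01w`, `h(01w) = 00w`,
`h(10w) = 100w`, `h(110w) = 101w`, `h(111w) = 11w`. -/
def HRules (h : (ℕ → Bool) → ℕ → Bool) : Prop :=
  ∀ w : ℕ → Bool,
    h (cat [false, false] w) = cat [false, true] w ∧
    h (cat [false, true] w) = cat [false, false] w ∧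
    h (cat [true, false] w) = cat [true, false, false] w ∧
    h (cat [true, true, false] w) = cat [true, false, true] w ∧
    h (cat [true, true, true] w) = cat [true, true] w

/-- The map `h` has infinite order as a permutation of `ℕ → Bool`:
no positive iterate of `h` is the identity. -/
theorem h_infinite_order (h : (ℕ → Bool) → ℕ → Bool) (hh : HRules h) :
    ∀ k, 1 ≤ k → h^[k] ≠ id := by
  have step : ∀ n : ℕ, h (cat [true, false] (fun i => decide (n ≤ i))) =
      cat [true, false] (fun i => decide (n + 1 ≤ i)) := by
    intro n
    rw [(hh _).2.2.1]
    funext i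
    rcases i with _ | _ | _ | i <;> simp [cat]
  have iter : ∀ n : ℕ, h^[n] (cat [true, false] (fun i => decide (0 ≤ i))) =
      cat [true, false] (fun i => decide (n ≤ i)) := by
    intro n
    induction n with
    | zero => rfl
    | succ n ih => rw [Function.iterate_succ_apply', ih, step]
  intro k hk hid
  have h1 := iter k
  rw [hid] at h1
  have h2 := congrFun h1 2
  simp [cat] at h2
  omega
end

section
/- Let n ≥ 1 and let g be a prefix-exchange map with n parts on the Cantor space ℕ → Bool. Then exactly one of the following holds: either g has finite order as a permutation of ℕ → Bool, or there exist a finite binary word u, a nonempty finite binary word s, and an integer b with 1 ≤ b ≤ 2^{n−1} such that g^b(u ++ w) = u ++ s ++ w for every w ∈ 𝔠 (an attracting periodic cycle); in the latter case g has infinite order. -/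
/-- A finite family of binary words is a complete prefix code if every point of the
Cantor space has exactly one of the words as a prefix. -/
def IsCompletePrefixCode {m : ℕ} (u : Fin m → List Bool) : Prop :=
  ∀ x : ℕ → Bool, ∃! i : Fin m, ∃ w : ℕ → Bool, x = cat (u i) w

/-- A prefix-exchange map with `n` parts: there are complete prefix codes
`(u_1, …, u_n)` and `(v_1, …, v_n)` and a permutation `σ` of `{1, …, n}` with
`g(u_i ++ w) = v_{σ(i)} ++ w` for all `i` and `w`. -/
def IsPrefixExchange (n : ℕ) (g : (ℕ → Bool) → ℕ → Bool) : Prop :=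
  ∃ u v : Fin n → List Bool, IsCompletePrefixCode u ∧ IsCompletePrefixCode v ∧
    ∃ σ : Equiv.Perm (Fin n),
      ∀ (i : Fin n) (w : ℕ → Bool), g (cat (u i) w) = cat (v (σ i)) w

theorem cat_append (u s : List Bool) (w : ℕ → Bool) : cat (u ++ s) w = cat u (cat s w) := by
  funext i
  simp only [cat]
  by_cases h : i < u.length
  · simp [List.getD_eq_getElem?_getD, h, List.getElem?_append_left h]
  · push Not at h
    simp [List.getD_eq_getElem?_getD, List.getElem?_append_right h, List.getElem?_eq_none h,
      Nat.sub_sub]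

theorem cat_at (u : List Bool) (w : ℕ → Bool) (i : ℕ) : cat u w (u.length + i) = w i := by
  simp [cat, List.getD_eq_getElem?_getD]

theorem cat_inj (u : List Bool) {w w' : ℕ → Bool} (h : cat u w = cat u w') : w = w' := by
  funext i
  rw [← cat_at u w i, ← cat_at u w' i, h]

theorem cat_lt (u : List Bool) (w : ℕ → Bool) (i : ℕ) (h : i < u.length) :
    cat u w i = u[i] := by
  simp [cat, List.getD_eq_getElem?_getD, h]

theorem cat_comparable {u v : List Bool} {w w' : ℕ → Bool} (h : cat u w = cat v w') :
    u <+: v ∨ v <+: u := by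
  have key : ∀ (u v : List Bool) (w w' : ℕ → Bool), cat u w = cat v w' →
      u.length ≤ v.length → u <+: v := by
    intro u v w w' h hl
    rw [List.prefix_iff_getElem]
    refine ⟨hl, fun i hi => ?_⟩
    rw [← cat_lt u w i hi, ← cat_lt v w' i (by omega), h]
  rcases le_total u.length v.length with hl | hl
  · exact Or.inl (key u v w w' h hl)
  · exact Or.inr (key v u w' w h.symm hl)

/-- Membership of a point in the cylinder of a word. -/
def InCyl (u : List Bool) (p : ℕ → Bool) : Prop := ∃ w, p = cat u w

theorem inCyl_mono {u v : List Bool} (h : u <+: v) {p : ℕ → Bool} (hp : InCyl v p) :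
    InCyl u p := by
  obtain ⟨s, rfl⟩ := h
  obtain ⟨w, rfl⟩ := hp
  exact ⟨cat s w, cat_append u s w⟩

theorem inCyl_cat (u : List Bool) (w : ℕ → Bool) : InCyl u (cat u w) := ⟨w, rfl⟩

theorem InCyl.comparable {u v : List Bool} {p : ℕ → Bool} (hu : InCyl u p) (hv : InCyl v p) :
    u <+: v ∨ v <+: u := by
  obtain ⟨w, rfl⟩ := hu
  obtain ⟨w', h⟩ := hv
  exact cat_comparable h

/-- The words indexed by `S` have pairwise disjoint cylinders. -/
def Anti {ι : Type} (S : Finset ι) (u : ι → List Bool) : Prop :=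
  ∀ i ∈ S, ∀ j ∈ S, u i <+: u j → i = j

theorem Anti.unique {ι : Type} {S : Finset ι} {u : ι → List Bool} (h : Anti S u)
    {i j : ι} (hi : i ∈ S) (hj : j ∈ S) {p : ℕ → Bool} (h1 : InCyl (u i) p)
    (h2 : InCyl (u j) p) : i = j := by
  rcases h1.comparable h2 with h3 | h3
  · exact h i hi j hj h3
  · exact (h j hj i hi h3).symm

/-- The words indexed by `S` cover the same set of points. -/
def SameCover {ι : Type} (S : Finset ι) (u v : ι → List Bool) : Prop :=
  ∀ p, (∃ i ∈ S, InCyl (u i) p) ↔ (∃ i ∈ S, InCyl (v i) p)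

/-- A proper extension misses a point. -/
theorem exists_miss {u s : List Bool} (hs : s ≠ []) : ∃ p, InCyl u p ∧ ¬ InCyl (u ++ s) p := by
  obtain ⟨a, s, rfl⟩ := List.exists_cons_of_ne_nil hs
  refine ⟨cat u (fun _ => !a), inCyl_cat _ _, ?_⟩
  rintro ⟨w, hw⟩
  rw [cat_append] at hw
  have := congrFun (cat_inj u hw) 0
  simp [cat] at this

/-- Some domain word has no range word as a proper prefix. -/
theorem exists_root {ι : Type} {S : Finset ι} {u v : ι → List Bool}
    (hu : Anti S u) (hv : Anti S v) (hc : SameCover S u v) (hS : S.Nonempty) :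
    ∃ i ∈ S, ∀ j ∈ S, v j <+: u i → v j = u i := by
  by_contra! hcon
  choose! f hfS hfp hfne using hcon
  have hsurj : Set.SurjOn f S S := by
    intro j hj
    obtain ⟨i, hi, hp⟩ := (hc (cat (v j) (fun _ => true))).2 ⟨j, hj, inCyl_cat _ _⟩
    refine ⟨i, hi, ?_⟩
    rcases hp.comparable (inCyl_cat (v j) _) with h | h
    · exact hv _ (hfS i hi) _ hj ((hfp i hi).trans h)
    · exact hv.unique (hfS i hi) hj (inCyl_mono (hfp i hi) (inCyl_cat (u i) (fun _ => true)))
        (inCyl_mono h (inCyl_cat (u i) (fun _ => true)))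
  have hinj : Set.InjOn f S :=
    Finset.injOn_of_surjOn_of_card_le f (fun i hi => hfS i hi) hsurj le_rfl
  obtain ⟨i, hi⟩ := hS
  obtain ⟨s, hs⟩ := hfp i hi
  have hs0 : s ≠ [] := by
    rintro rfl
    exact hfne i hi (by simpa using hs)
  obtain ⟨p, hp1, hp2⟩ := exists_miss (u := v (f i)) hs0
  rw [hs] at hp2
  obtain ⟨k, hk, hpk⟩ := (hc p).2 ⟨f i, hfS i hi, hp1⟩
  have hki : k ≠ i := by
    rintro rfl
    exact hp2 hpk
  rcases hpk.comparable hp1 with h | h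
  · exact hki (hu k hk i hi (h.trans (hfp i hi)))
  · refine hki (hinj hk hi ?_)
    exact hv.unique (hfS k hk) (hfS i hi) (inCyl_mono (hfp k hk) hpk) hp1

theorem main_induction {ι : Type} [DecidableEq ι] (g : (ℕ → Bool) → ℕ → Bool)
    (hg : Function.Injective g) (u : ι → List Bool) :
    ∀ (n : ℕ) (S : Finset ι), S.card = n → ∀ (v : ι → List Bool) (t : ι → ℕ) (T : ℕ),
      Anti S u → Anti S v → SameCover S u v →
      (∀ i ∈ S, 1 ≤ t i ∧ t i ≤ T) →
      (∀ i ∈ S, ∀ w, g^[t i] (cat (u i) w) = cat (v i) w) →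
      (∃ x s : List Bool, s ≠ [] ∧ ∃ b, 1 ≤ b ∧ b ≤ T * 2 ^ (n - 1) ∧
        ∀ w : ℕ → Bool, g^[b] (cat x w) = cat x (cat s w)) ∨
      ∃ m, 0 < m ∧ ∀ p, (∃ i ∈ S, InCyl (u i) p) → g^[m] p = p := by
  intro n
  induction n with
  | zero =>
    intro S hS v t T _ _ _ _ _
    rw [Finset.card_eq_zero] at hS
    subst hS
    exact Or.inr ⟨1, one_pos, by simp⟩
  | succ n ih =>
    intro S hS v t T hu hv hc ht hgt
    obtain ⟨i, hi, hroot⟩ := exists_root hu hv hc (Finset.card_pos.1 (by omega))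
    have hcard : (S.erase i).card = n := by rw [Finset.card_erase_of_mem hi]; omega
    have hu' : Anti (S.erase i) u := fun a ha b hb =>
      hu a (Finset.mem_of_mem_erase ha) b (Finset.mem_of_mem_erase hb)
    have hv' : Anti (S.erase i) v := fun a ha b hb =>
      hv a (Finset.mem_of_mem_erase ha) b (Finset.mem_of_mem_erase hb)
    have hTle : ∀ c, c ≤ T → c ≤ T * 2 ^ n := fun c h =>
      h.trans (Nat.le_mul_of_pos_right _ (by positivity))
    have hTT : T * 2 ^ (n - 1) ≤ T * 2 ^ n :=
      Nat.mul_le_mul_left _ (Nat.pow_le_pow_right (by norm_num) (by omega))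
    -- points covered by the remaining domain words
    have hcu : ∀ p, (∃ k ∈ S.erase i, InCyl (u k) p) ↔
        ((∃ k ∈ S, InCyl (u k) p) ∧ ¬ InCyl (u i) p) := by
      intro p
      constructor
      · rintro ⟨k, hk, hp⟩
        exact ⟨⟨k, Finset.mem_of_mem_erase hk, hp⟩, fun h =>
          Finset.ne_of_mem_erase hk (hu.unique (Finset.mem_of_mem_erase hk) hi hp h)⟩
      · rintro ⟨⟨k, hk, hp⟩, hn⟩
        refine ⟨k, Finset.mem_erase.2 ⟨?_, hk⟩, hp⟩
        rintro rfl
        exact hn hp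
    have hcv : ∀ p, (∃ k ∈ S.erase i, InCyl (v k) p) ↔
        ((∃ k ∈ S, InCyl (u k) p) ∧ ¬ InCyl (v i) p) := by
      intro p
      rw [hc p]
      constructor
      · rintro ⟨k, hk, hp⟩
        exact ⟨⟨k, Finset.mem_of_mem_erase hk, hp⟩, fun h =>
          Finset.ne_of_mem_erase hk (hv.unique (Finset.mem_of_mem_erase hk) hi hp h)⟩
      · rintro ⟨⟨k, hk, hp⟩, hn⟩
        refine ⟨k, Finset.mem_erase.2 ⟨?_, hk⟩, hp⟩
        rintro rfl
        exact hn hp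
    by_cases hvi : u i <+: v i
    · obtain ⟨s, hs⟩ := hvi
      by_cases hs0 : s = []
      · -- the cylinder is fixed pointwise
        subst hs0
        rw [List.append_nil] at hs
        have hc' : SameCover (S.erase i) u v := by
          intro p
          rw [hcu, hcv, hs]
        rcases ih (S.erase i) hcard v t T hu' hv' hc'
          (fun k hk => ht k (Finset.mem_of_mem_erase hk))
          (fun k hk => hgt k (Finset.mem_of_mem_erase hk)) with h | ⟨m, hm, h⟩
        · left
          obtain ⟨x, s, hs, b, hb1, hb2, hb3⟩ := h
          exact ⟨x, s, hs, b, hb1, hb2.trans hTT, hb3⟩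
        · right
          refine ⟨m * t i, Nat.mul_pos hm (ht i hi).1, ?_⟩
          intro p hp
          by_cases hpi : InCyl (u i) p
          · obtain ⟨w, rfl⟩ := hpi
            rw [mul_comm, Function.iterate_mul]
            exact Function.iterate_fixed (by rw [hgt i hi w, ← hs]) m
          · rw [Function.iterate_mul]
            exact Function.iterate_fixed (h p ((hcu p).2 ⟨hp, hpi⟩)) _
      · left
        refine ⟨u i, s, hs0, t i, (ht i hi).1, hTle _ (ht i hi).2, fun w => ?_⟩
        rw [hgt i hi w, ← hs, cat_append]
    · -- the image is disjoint from the cylinder of `u i`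
      have hdis : ∀ p, InCyl (v i) p → ¬ InCyl (u i) p := by
        intro p h1 h2
        rcases h1.comparable h2 with h | h
        · exact hvi (hroot i hi h ▸ List.prefix_rfl)
        · exact hvi h
      classical
      let v' : ι → List Bool := fun k =>
        if u i <+: v k then v i ++ (v k).drop (u i).length else v k
      let t' : ι → ℕ := fun k => if u i <+: v k then t i + t k else t k
      have hv1 : ∀ k y, v k = u i ++ y → v' k = v i ++ y := by
        intro k y h
        simp [v', h]
      have hv2 : ∀ k, ¬ (u i <+: v k) → v' k = v k := fun k h => if_neg h
      have hnot : ∀ k ∈ S, ¬ (u i <+: v k) → ∀ p, InCyl (v k) p → ¬ InCyl (u i) p := by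
        intro k hk hn p h1 h2
        rcases h1.comparable h2 with h | h
        · exact hn (hroot k hk h ▸ List.prefix_rfl)
        · exact hn h
      have hA' : Anti (S.erase i) v' := by
        intro a ha b hb hab
        have haS := Finset.mem_of_mem_erase ha
        have hbS := Finset.mem_of_mem_erase hb
        by_cases h1 : u i <+: v a
        · obtain ⟨y, hy⟩ := h1
          rw [hv1 a y hy.symm] at hab
          by_cases h2 : u i <+: v b
          · obtain ⟨z, hz⟩ := h2
            rw [hv1 b z hz.symm, List.prefix_append_right_inj] at hab
            apply hv a haS b hbS
            rw [← hy, ← hz, List.prefix_append_right_inj]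
            exact hab
          · rw [hv2 b h2] at hab
            exact absurd (hv i hi b hbS ((List.prefix_append _ _).trans hab)).symm
              (Finset.ne_of_mem_erase hb)
        · rw [hv2 a h1] at hab
          by_cases h2 : u i <+: v b
          · obtain ⟨z, hz⟩ := h2
            rw [hv1 b z hz.symm] at hab
            refine absurd ?_ (Finset.ne_of_mem_erase ha)
            exact hv.unique haS hi (inCyl_mono hab (inCyl_cat _ (fun _ => true)))
              (inCyl_mono (List.prefix_append _ _) (inCyl_cat _ (fun _ => true)))
          · rw [hv2 b h2] at hab
            exact hv a haS b hbS hab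
      have hc' : SameCover (S.erase i) u v' := by
        intro p
        rw [hcu]
        constructor
        · rintro ⟨hp, hpi⟩
          by_cases hpv : InCyl (v i) p
          · obtain ⟨w, rfl⟩ := hpv
            obtain ⟨k, hk, hkp⟩ := (hcv (cat (u i) w)).2
              ⟨⟨i, hi, inCyl_cat _ _⟩, fun h => hdis _ h (inCyl_cat _ _)⟩
            refine ⟨k, hk, ?_⟩
            have hpre : u i <+: v k := by
              by_contra hn
              exact hnot k (Finset.mem_of_mem_erase hk) hn _ hkp (inCyl_cat _ _)
            obtain ⟨y, hy⟩ := hpre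
            rw [hv1 k y hy.symm]
            obtain ⟨w', hw'⟩ := hkp
            rw [← hy, cat_append] at hw'
            refine ⟨w', ?_⟩
            rw [cat_append, cat_inj _ hw']
          · obtain ⟨k, hk, hkp⟩ := (hcv p).2 ⟨hp, hpv⟩
            refine ⟨k, hk, ?_⟩
            rw [hv2 k (fun h => hpi (inCyl_mono h hkp))]
            exact hkp
        · rintro ⟨k, hk, hp⟩
          have hkS := Finset.mem_of_mem_erase hk
          by_cases h1 : u i <+: v k
          · obtain ⟨y, hy⟩ := h1
            rw [hv1 k y hy.symm] at hp
            have := inCyl_mono (List.prefix_append _ _) hp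
            exact ⟨(hc p).2 ⟨i, hi, this⟩, hdis p this⟩
          · rw [hv2 k h1] at hp
            exact ⟨(hc p).2 ⟨k, hkS, hp⟩, hnot k hkS h1 p hp⟩
      have ht' : ∀ k ∈ S.erase i, 1 ≤ t' k ∧ t' k ≤ 2 * T := by
        intro k hk
        have h1 := ht k (Finset.mem_of_mem_erase hk)
        have h2 := ht i hi
        simp only [t']
        split_ifs <;> omega
      have hgt' : ∀ k ∈ S.erase i, ∀ w, g^[t' k] (cat (u k) w) = cat (v' k) w := by
        intro k hk w
        have hkS := Finset.mem_of_mem_erase hk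
        by_cases h1 : u i <+: v k
        · have e : t' k = t i + t k := if_pos h1
          obtain ⟨y, hy⟩ := h1
          rw [hv1 k y hy.symm, e, Function.iterate_add_apply, hgt k hkS, ← hy, cat_append,
            hgt i hi, cat_append]
        · have e : t' k = t k := if_neg h1
          rw [hv2 k h1, e, hgt k hkS]
      rcases ih (S.erase i) hcard v' t' (2 * T) hu' hA' hc' ht' hgt' with h | ⟨m, hm, h⟩
      · rcases Nat.eq_zero_or_pos n with hn | hn
        · -- impossible: only one part, but its image is disjoint from it
          exfalso
          subst hn
          rw [Finset.card_eq_zero] at hcard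
          obtain ⟨k, hk, _⟩ := (hcu (cat (v i) (fun _ => true))).2
            ⟨(hc _).2 ⟨i, hi, inCyl_cat _ _⟩, hdis _ (inCyl_cat _ _)⟩
          simp [hcard] at hk
        · left
          obtain ⟨x, s, hs, b, hb1, hb2, hb3⟩ := h
          refine ⟨x, s, hs, b, hb1, hb2.trans (le_of_eq ?_), hb3⟩
          obtain ⟨l, rfl⟩ : ∃ l, n = l + 1 := ⟨n - 1, by omega⟩
          simp only [Nat.add_sub_cancel]
          ring
      · right
        refine ⟨m, hm, fun p hp => ?_⟩
        by_cases hpi : InCyl (u i) p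
        · obtain ⟨w, rfl⟩ := hpi
          apply hg.iterate (t i)
          rw [← Function.iterate_add_apply, add_comm, Function.iterate_add_apply, hgt i hi]
          exact h _ ((hcu _).2 ⟨(hc _).2 ⟨i, hi, inCyl_cat _ _⟩, hdis _ (inCyl_cat _ _)⟩)
        · exact h p ((hcu p).2 ⟨hp, hpi⟩)

theorem IsCompletePrefixCode.anti {m : ℕ} {u : Fin m → List Bool}
    (h : IsCompletePrefixCode u) : Anti Finset.univ u := by
  intro i _ j _ hij
  obtain ⟨k, _, hk⟩ := h (cat (u j) (fun _ => true))
  rw [hk i (inCyl_mono hij (inCyl_cat _ _)), hk j (inCyl_cat _ _)]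

theorem IsCompletePrefixCode.cover {m : ℕ} {u : Fin m → List Bool}
    (h : IsCompletePrefixCode u) (p : ℕ → Bool) : ∃ i, InCyl (u i) p :=
  (h p).exists

/-- For a prefix-exchange map `g` with `n ≥ 1` parts, exactly one of the following holds:
either `g` has finite order, or some iterate `g^b` with `1 ≤ b ≤ 2^(n-1)` maps a
cylinder strictly inside itself by inserting a nonempty word (an attracting periodic
cycle); in the latter case `g` has infinite order. -/
theorem finite_order_or_attracting_cycle
    (n : ℕ) (hn : 1 ≤ n) (g : (ℕ → Bool) → ℕ → Bool)
    (hpe : IsPrefixExchange n g) :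
    Xor' (∃ m, 0 < m ∧ g^[m] = id)
      (∃ u s : List Bool, s ≠ [] ∧ ∃ b, 1 ≤ b ∧ b ≤ 2 ^ (n - 1) ∧
        ∀ w : ℕ → Bool, g^[b] (cat u w) = cat u (cat s w)) := by
  obtain ⟨u, v, hu, hv, σ, hσ⟩ := hpe
  have hvσ : Anti Finset.univ (fun i => v (σ i)) := fun i _ j _ hij =>
    σ.injective (hv.anti _ (Finset.mem_univ _) _ (Finset.mem_univ _) hij)
  have hg : Function.Injective g := by
    intro p q hpq
    obtain ⟨i, w, rfl⟩ := hu.cover p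
    obtain ⟨j, w', rfl⟩ := hu.cover q
    rw [hσ, hσ] at hpq
    have hij : i = j := hvσ.unique (Finset.mem_univ _) (Finset.mem_univ _)
      (inCyl_cat _ w) ⟨w', hpq⟩
    subst hij
    rw [cat_inj _ hpq]
  have hc : SameCover Finset.univ u (fun i => v (σ i)) := by
    intro p
    obtain ⟨i, hi⟩ := hu.cover p
    obtain ⟨j, hj⟩ := hv.cover p
    refine iff_of_true ⟨i, Finset.mem_univ _, hi⟩ ⟨σ.symm j, Finset.mem_univ _, ?_⟩
    simpa using hj
  have hnb : ∀ m, 0 < m → g^[m] = id →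
      ¬ (∃ u s : List Bool, s ≠ [] ∧ ∃ b, 1 ≤ b ∧ b ≤ 2 ^ (n - 1) ∧
        ∀ w : ℕ → Bool, g^[b] (cat u w) = cat u (cat s w)) := by
    rintro m hm hid ⟨x, s, hs, b, _, _, hb⟩
    have key : ∀ k w, (g^[b])^[k] (cat x w) = cat x ((cat s)^[k] w) := by
      intro k w
      have : Function.Semiconj (cat x) (cat s) (g^[b]) := fun w => (hb w).symm
      exact ((this.iterate_right k) w).symm
    obtain ⟨a, s, rfl⟩ := List.exists_cons_of_ne_nil hs
    obtain ⟨l, rfl⟩ : ∃ l, m = l + 1 := ⟨m - 1, by omega⟩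
    have h1 := key (l + 1) (fun _ => !a)
    rw [← Function.iterate_mul, mul_comm, Function.iterate_mul, hid, Function.iterate_id,
      Function.iterate_succ_apply'] at h1
    have h2 := congrFun (cat_inj x h1) 0
    simp [cat] at h2
  rcases main_induction g hg u n Finset.univ (by simp) (fun i => v (σ i)) (fun _ => 1) 1
    hu.anti hvσ hc (by simp) (fun i _ w => by simpa using hσ i w) with h | ⟨m, hm, h⟩
  · right
    refine ⟨by simpa only [one_mul] using h, ?_⟩
    rintro ⟨m, hm, hid⟩
    exact hnb m hm hid (by simpa only [one_mul] using h)
  · left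
    have hid : g^[m] = id := by
      funext p
      obtain ⟨i, hi⟩ := hu.cover p
      exact h p ⟨i, Finset.mem_univ _, hi⟩
    exact ⟨⟨m, hm, hid⟩, hnb m hm hid⟩
end
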